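/- arXiv:2504.17285 — 4 statements merged into one kernel-verified Lean document; each statement's English description precedes it below -/
import Mathlib

section
/- Let p, q, r ≥ 1 be real exponents. For all ε, δ, σ > 0 there exist positive constants C_ε, C_δ, C_σ (depending only on ε, δ, σ, p, q, r) and C > 0 (depending only on p, q, r) such that for every R > 0, every s, t with 3R/2 ≤ s < t ≤ 2R, every pair of smooth vector fields u, v : ℝ³ → ℝ³ and every smooth function θ : ℝ³ → ℝ, the quantity J₁ = (t−s)^{−2} ∫_{B_t∖B_s} (|u|² + |v|² + |θ − θ̄_R|²) dx satisfies J₁ ≤ ε‖u‖²_{L^6(B_t∖B_R)} + C_ε (t−s)^{−(6/p−1)} ‖u‖²_{L^p(B_{2R}∖B_R)} + C (t−s)^{−2} R^{3−6/p} ‖u‖²_{L^p(B_{2R}∖B_R)} + δ‖v‖²_{L^6(B_t∖B_R)} + C_δ (t−s)^{−(6/q−1)} ‖v‖²_{L^q(B_{2R}∖B_R)} + C (t−s)^{−2} R^{3−6/q} ‖v‖²_{L^q(B_{2R}∖B_R)} + σ‖θ − θ̄_R‖²_{L^6(B_t∖B_R)} + C_σ (t−s)^{−(6/r−1)} ‖θ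 − θ̄_R‖²_{L^r(B_{2R}∖B_R)} + C (t−s)^{−2} R^{3−6/r} ‖θ − θ̄_R‖²_{L^r(B_{2R}∖B_R)} (the inequality interpreted in the extended nonnegative reals). -/
/-!
Each field obeys the same estimate on the shell `B_t \ B_s`, and the two regimes of the exponent `p`
use disjoint parts of the bound. For `p < 2 < m`, write `1/2 = a/p + b/m` with `a + b = 1`: then
`‖f‖₂² ≤ (‖f‖_p²)^a (‖f‖_m²)^b`, and Young's inequality turns `(t - s)⁻²` times this product into
the first two terms. For `p ≥ 2`, Hölder's inequality on the annulus, whose volume is at most a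
multiple of `R ^ d`, gives the third term alone.
-/

open MeasureTheory Metric Filter
open scoped ENNReal NNReal

noncomputable section

/-- Euclidean `ℝ³`. -/
abbrev E3 := EuclideanSpace ℝ (Fin 3)

/-- The annulus `B_{2R} \ B_R` centered at the origin. -/
def Ann (R : ℝ) : Set E3 := ball (0 : E3) (2 * R) \ ball (0 : E3) R

/-- Mean value of `θ` over the annulus `B_{2R} \ B_R`. -/
def thetaBar (θ : E3 → ℝ) (R : ℝ) : ℝ := ⨍ x in Ann R, θ x

/-- `L^p` norm (with real exponent `p`) of `f` over the set `s`, valued in `ℝ≥0∞`. -/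
def LpS {F : Type*} [NormedAddCommGroup F] (f : E3 → F) (p : ℝ) (s : Set E3) : ℝ≥0∞ :=
  eLpNorm f (ENNReal.ofReal p) (volume.restrict s)

lemma rpow_mul_rpow_le_add (X Y : ℝ≥0∞) {a b : ℝ} (ha : 0 ≤ a) (hb : 0 ≤ b) (hab : a + b = 1) :
    X ^ a * Y ^ b ≤ X + Y := by
  calc X ^ a * Y ^ b ≤ (X + Y) ^ a * (X + Y) ^ b := by
        gcongr
        · exact le_self_add
        · exact le_add_self
    _ = X + Y := by
        rw [← ENNReal.rpow_add_of_nonneg _ _ ha hb, hab, ENNReal.rpow_one]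

lemma mul_rpow_mul_rpow_le_scaled_add (M X Y : ℝ≥0∞) {ε : ℝ≥0∞} (hε : ε ≠ 0) (hε' : ε ≠ ∞)
    {a b : ℝ} (ha : 0 < a) (hb : 0 ≤ b) (hab : a + b = 1) :
    M * (X ^ a * Y ^ b) ≤ ε * Y + ε ^ (-(b / a)) * M ^ a⁻¹ * X := by
  have scale : M = (ε ^ (-(b / a)) * M ^ a⁻¹) ^ a * ε ^ b := by
    have hexp : -(b / a) * a = -b := by field_simp
    rw [ENNReal.mul_rpow_of_nonneg _ _ ha.le, ← ENNReal.rpow_mul, ← ENNReal.rpow_mul, hexp,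
      inv_mul_cancel₀ ha.ne', ENNReal.rpow_one, mul_right_comm, ← ENNReal.rpow_add _ _ hε hε',
      neg_add_cancel, ENNReal.rpow_zero, one_mul]
  calc M * (X ^ a * Y ^ b)
      = (ε ^ (-(b / a)) * M ^ a⁻¹ * X) ^ a * (ε * Y) ^ b := by
        nth_rewrite 1 [scale]
        rw [ENNReal.mul_rpow_of_nonneg _ X ha.le, ENNReal.mul_rpow_of_nonneg _ Y hb]
        ring
    _ ≤ ε * Y + ε ^ (-(b / a)) * M ^ a⁻¹ * X :=
        (rpow_mul_rpow_le_add _ _ ha.le hb hab).trans_eq (add_comm _ _)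

section Lebesgue

variable {α F : Type*} [MeasurableSpace α] {μ : Measure α} [NormedAddCommGroup F] {f : α → F}

lemma eLpNorm_ofReal_eq_lintegral_rpow (f : α → F) {p : ℝ} (hp : 0 < p) :
    eLpNorm f (ENNReal.ofReal p) μ = (∫⁻ x, ‖f x‖ₑ ^ p ∂μ) ^ (1 / p) := by
  rw [eLpNorm_eq_lintegral_rpow_enorm_toReal (by simpa using hp) ENNReal.ofReal_ne_top,
    ENNReal.toReal_ofReal hp.le]

lemma lintegral_enorm_sq_eq_eLpNorm_sq (f : α → F) :
    ∫⁻ x, ‖f x‖ₑ ^ 2 ∂μ = eLpNorm f (ENNReal.ofReal 2) μ ^ 2 := by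
  rw [eLpNorm_ofReal_eq_lintegral_rpow f two_pos, ← ENNReal.rpow_two, ← ENNReal.rpow_mul]
  norm_num

lemma eLpNorm_le_eLpNorm_rpow_mul_eLpNorm_rpow (hf : AEStronglyMeasurable f μ) {p q r a b : ℝ}
    (hp : 0 < p) (hq : 0 < q) (hr : 0 < r) (ha : 0 ≤ a) (hb : 0 ≤ b) (hab : a + b = 1)
    (hr_inv : a / p + b / q = 1 / r) :
    eLpNorm f (ENNReal.ofReal r) μ ≤
      eLpNorm f (ENNReal.ofReal p) μ ^ a * eLpNorm f (ENNReal.ofReal q) μ ^ b := by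
  have hweights : r * (a / p) + r * (b / q) = 1 := by
    rw [← mul_add, hr_inv, mul_one_div_cancel hr.ne']
  have hsplit : ∀ x, ‖f x‖ₑ ^ r = (‖f x‖ₑ ^ p) ^ (r * (a / p)) * (‖f x‖ₑ ^ q) ^ (r * (b / q)) := by
    intro x
    rw [← ENNReal.rpow_mul, ← ENNReal.rpow_mul,
      ← ENNReal.rpow_add_of_nonneg _ _ (by positivity) (by positivity)]
    congr 1
    field_simp
    exact hab.symm
  have hHolder : ∫⁻ x, ‖f x‖ₑ ^ r ∂μ ≤
      (∫⁻ x, ‖f x‖ₑ ^ p ∂μ) ^ (r * (a / p)) * (∫⁻ x, ‖f x‖ₑ ^ q ∂μ) ^ (r * (b / q)) := by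
    simp only [hsplit]
    exact ENNReal.lintegral_mul_norm_pow_le (hf.enorm.pow_const p) (hf.enorm.pow_const q)
      (by positivity) (by positivity) hweights
  rw [eLpNorm_ofReal_eq_lintegral_rpow f hp, eLpNorm_ofReal_eq_lintegral_rpow f hq,
    eLpNorm_ofReal_eq_lintegral_rpow f hr]
  calc (∫⁻ x, ‖f x‖ₑ ^ r ∂μ) ^ (1 / r)
      ≤ ((∫⁻ x, ‖f x‖ₑ ^ p ∂μ) ^ (r * (a / p)) * (∫⁻ x, ‖f x‖ₑ ^ q ∂μ) ^ (r * (b / q)))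
          ^ (1 / r) := by gcongr
    _ = ((∫⁻ x, ‖f x‖ₑ ^ p ∂μ) ^ (1 / p)) ^ a * ((∫⁻ x, ‖f x‖ₑ ^ q ∂μ) ^ (1 / q)) ^ b := by
        rw [ENNReal.mul_rpow_of_nonneg _ _ (by positivity)]
        simp only [← ENNReal.rpow_mul]
        congr 2 <;> field_simp

lemma mul_lintegral_enorm_sq_le_interpolation (hf : AEStronglyMeasurable f μ) {p m a b ε τ : ℝ}
    (hp : 0 < p) (hm : 0 < m) (ha : 0 < a) (hb : 0 ≤ b) (hab : a + b = 1)
    (h_inv : a / p + b / m = 1 / 2) (hε : 0 < ε) (hτ : 0 < τ) :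
    ENNReal.ofReal (τ ^ (-2 : ℝ)) * ∫⁻ x, ‖f x‖ₑ ^ 2 ∂μ ≤
      ENNReal.ofReal ε * eLpNorm f (ENNReal.ofReal m) μ ^ 2 +
        ENNReal.ofReal (ε ^ (-(b / a))) * ENNReal.ofReal (τ ^ (-(2 / a))) *
          eLpNorm f (ENNReal.ofReal p) μ ^ 2 := by
  have hinterp : ∫⁻ x, ‖f x‖ₑ ^ 2 ∂μ ≤
      (eLpNorm f (ENNReal.ofReal p) μ ^ 2) ^ a * (eLpNorm f (ENNReal.ofReal m) μ ^ 2) ^ b := by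
    rw [lintegral_enorm_sq_eq_eLpNorm_sq, ← ENNReal.rpow_natCast_mul, ← ENNReal.rpow_natCast_mul,
      mul_comm _ a, mul_comm _ b, ENNReal.rpow_mul_natCast, ENNReal.rpow_mul_natCast, ← mul_pow]
    gcongr
    exact eLpNorm_le_eLpNorm_rpow_mul_eLpNorm_rpow hf hp hm two_pos ha.le hb hab h_inv
  have hconst : ENNReal.ofReal (τ ^ (-2 : ℝ)) ^ a⁻¹ = ENNReal.ofReal (τ ^ (-(2 / a))) := by
    rw [ENNReal.ofReal_rpow_of_pos (by positivity), ← Real.rpow_mul hτ.le, neg_mul,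
      ← div_eq_mul_inv]
  calc ENNReal.ofReal (τ ^ (-2 : ℝ)) * ∫⁻ x, ‖f x‖ₑ ^ 2 ∂μ
      ≤ ENNReal.ofReal (τ ^ (-2 : ℝ)) *
          ((eLpNorm f (ENNReal.ofReal p) μ ^ 2) ^ a *
            (eLpNorm f (ENNReal.ofReal m) μ ^ 2) ^ b) := by gcongr
    _ ≤ _ := mul_rpow_mul_rpow_le_scaled_add _ _ _ (by simpa using hε) ENNReal.ofReal_ne_top
          ha hb hab
    _ = _ := by rw [hconst, ENNReal.ofReal_rpow_of_pos hε]

lemma lintegral_enorm_sq_le_eLpNorm_sq_mul_measure_univ (hf : AEStronglyMeasurable f μ) {p : ℝ}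
    (hp : 2 ≤ p) :
    ∫⁻ x, ‖f x‖ₑ ^ 2 ∂μ ≤ eLpNorm f (ENNReal.ofReal p) μ ^ 2 * μ Set.univ ^ (1 - 2 / p) := by
  have hHolder := eLpNorm_le_eLpNorm_mul_rpow_measure_univ (ENNReal.ofReal_le_ofReal hp) hf
  rw [ENNReal.toReal_ofReal two_pos.le, ENNReal.toReal_ofReal (two_pos.trans_le hp).le] at hHolder
  calc ∫⁻ x, ‖f x‖ₑ ^ 2 ∂μ = eLpNorm f (ENNReal.ofReal 2) μ ^ 2 :=
        lintegral_enorm_sq_eq_eLpNorm_sq f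
    _ ≤ (eLpNorm f (ENNReal.ofReal p) μ * μ Set.univ ^ (1 / 2 - 1 / p)) ^ 2 := by gcongr
    _ = eLpNorm f (ENNReal.ofReal p) μ ^ 2 * μ Set.univ ^ (1 - 2 / p) := by
        rw [mul_pow, ← ENNReal.rpow_mul_natCast]
        ring_nf

end Lebesgue

/-- The weight `a` of `1 / p` in the interpolation `1 / 2 = a / p + (1 - a) / m`. When
`m = 6`, `2 / a = 6 / p - 1`; this includes `p = 6`, where division by zero makes `a` and `2 / a`
vanish. -/
def interpWeight (p m : ℝ) : ℝ := (1 / 2 - 1 / m) / (1 / p - 1 / m)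

lemma interpWeight_mem_Ioo {p m : ℝ} (hp : 0 < p) (hp2 : p < 2) (hm : 2 < m) :
    interpWeight p m ∈ Set.Ioo 0 1 := by
  have hm_inv : 1 / m < 1 / 2 := one_div_lt_one_div_of_lt two_pos hm
  have hp_inv : 1 / 2 < 1 / p := one_div_lt_one_div_of_lt hp hp2
  exact ⟨div_pos (by linarith) (by linarith), (div_lt_one (by linarith)).2 (by linarith)⟩

lemma interpWeight_div_add {p m : ℝ} (hpm : 1 / p ≠ 1 / m) :
    interpWeight p m / p + (1 - interpWeight p m) / m = 1 / 2 := by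
  have hcancel : interpWeight p m * (1 / p - 1 / m) = 1 / 2 - 1 / m :=
    div_mul_cancel₀ _ (sub_ne_zero.2 hpm)
  linear_combination hcancel

lemma restrict_ball_sdiff_ball_mono {X : Type*} [PseudoMetricSpace X] [MeasurableSpace X]
    (μ : Measure X) (x : X) {s s' t t' : ℝ} (hs : s' ≤ s) (ht : t ≤ t') :
    μ.restrict (ball x t \ ball x s) ≤ μ.restrict (ball x t' \ ball x s') :=
  Measure.restrict_mono (Set.sdiff_subset_sdiff (ball_subset_ball ht) (ball_subset_ball hs)) le_rfl

section Annulus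

variable {E F : Type*} [NormedAddCommGroup E] [NormedSpace ℝ E] [MeasurableSpace E]
  [NormedAddCommGroup F]

/-- The right-hand side of the estimate for a single field `f`, on a space of dimension `d`: an
absorbable `L^m` term with factor `ε`, an `L^p` term with factor `K (t - s) ^ (-(2 / a))`, where
`a` is the interpolation weight, and an `L^p` term with factor
`C (t - s) ^ (-2) R ^ (d (1 - 2 / p))`. -/
def shellBound (μ : Measure E) (m p ε K C R s t : ℝ) (f : E → F) : ℝ≥0∞ :=
  ENNReal.ofReal ε * eLpNorm f (ENNReal.ofReal m) (μ.restrict (ball 0 t \ ball 0 R)) ^ 2 +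
    ENNReal.ofReal K * ENNReal.ofReal ((t - s) ^ (-(2 / interpWeight p m))) *
      eLpNorm f (ENNReal.ofReal p) (μ.restrict (ball 0 (2 * R) \ ball 0 R)) ^ 2 +
    ENNReal.ofReal C * ENNReal.ofReal ((t - s) ^ (-2 : ℝ)) *
      ENNReal.ofReal (R ^ (Module.finrank ℝ E * (1 - 2 / p))) *
      eLpNorm f (ENNReal.ofReal p) (μ.restrict (ball 0 (2 * R) \ ball 0 R)) ^ 2

lemma shellBound_mono_const {μ : Measure E} {m p ε K C C' R s t : ℝ} {f : E → F} (h : C ≤ C') :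
    shellBound μ m p ε K C R s t f ≤ shellBound μ m p ε K C' R s t f := by
  unfold shellBound
  gcongr

lemma shell_interpolation_bound {μ : Measure E} {m p ε R s t : ℝ} (C : ℝ) {f : E → F} (hp : 0 < p)
    (hp2 : p < 2) (hm : 2 < m) (hε : 0 < ε) (hRs : R ≤ s) (hst : s < t) (ht : t ≤ 2 * R)
    (hf : AEStronglyMeasurable f (μ.restrict (ball 0 (2 * R) \ ball 0 R))) :
    ENNReal.ofReal ((t - s) ^ (-2 : ℝ)) * ∫⁻ x in ball 0 t \ ball 0 s, ‖f x‖ₑ ^ 2 ∂μ ≤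
      shellBound μ m p ε (ε ^ (-((1 - interpWeight p m) / interpWeight p m))) C R s t f := by
  obtain ⟨ha, ha1⟩ := interpWeight_mem_Ioo hp hp2 hm
  have hpm : 1 / p ≠ 1 / m := (one_div_lt_one_div_of_lt hp (hp2.trans hm)).ne'
  have hshell : μ.restrict (ball 0 t \ ball 0 s) ≤ μ.restrict (ball 0 t \ ball 0 R) :=
    restrict_ball_sdiff_ball_mono μ 0 hRs le_rfl
  have hannulus : μ.restrict (ball 0 t \ ball 0 s) ≤ μ.restrict (ball 0 (2 * R) \ ball 0 R) :=
    restrict_ball_sdiff_ball_mono μ 0 hRs ht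
  refine (mul_lintegral_enorm_sq_le_interpolation (hf.mono_measure hannulus) hp (two_pos.trans hm)
    ha (sub_nonneg.2 ha1.le) (by ring) (interpWeight_div_add hpm) hε (sub_pos.2 hst)).trans
    (le_trans ?_ le_self_add)
  gcongr

variable [FiniteDimensional ℝ E] [BorelSpace E] (μ : Measure E) [μ.IsAddHaarMeasure]

lemma measure_ball_mul_eq_ofReal (x : E) {r : ℝ} (hr : 0 < r) (s : ℝ) :
    μ (ball x (r * s)) = ENNReal.ofReal (r ^ Module.finrank ℝ E * μ.real (ball 0 s)) := by
  rw [Measure.addHaar_ball_mul_of_pos _ _ hr, ENNReal.ofReal_mul (by positivity),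
    ofReal_measureReal measure_ball_lt_top.ne]

variable {μ} in
lemma shell_holder_bound {m p ε R s t : ℝ} (K : ℝ) {f : E → F} (hp : 2 ≤ p) (hR : 0 < R)
    (hRs : R ≤ s) (ht : t ≤ 2 * R)
    (hf : AEStronglyMeasurable f (μ.restrict (ball 0 (2 * R) \ ball 0 R))) :
    ENNReal.ofReal ((t - s) ^ (-2 : ℝ)) * ∫⁻ x in ball 0 t \ ball 0 s, ‖f x‖ₑ ^ 2 ∂μ ≤
      shellBound μ m p ε K (μ.real (ball 0 2) ^ (1 - 2 / p)) R s t f := by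
  have hexp : 0 ≤ 1 - 2 / p := sub_nonneg.2 (div_le_one_of_le₀ hp (two_pos.le.trans hp))
  have hvol : μ (ball 0 (2 * R) \ ball 0 R) ^ (1 - 2 / p) ≤
      ENNReal.ofReal (μ.real (ball 0 2) ^ (1 - 2 / p)) *
        ENNReal.ofReal (R ^ (Module.finrank ℝ E * (1 - 2 / p))) := by
    calc μ (ball 0 (2 * R) \ ball 0 R) ^ (1 - 2 / p)
        ≤ ENNReal.ofReal (R ^ Module.finrank ℝ E * μ.real (ball 0 2)) ^ (1 - 2 / p) := by
          rw [← measure_ball_mul_eq_ofReal μ 0 hR, mul_comm R 2]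
          gcongr
          exact Set.sdiff_subset
      _ = _ := by
          rw [ENNReal.ofReal_rpow_of_nonneg (by positivity) hexp,
            Real.mul_rpow (by positivity) (by positivity), ENNReal.ofReal_mul (by positivity),
            ← Real.rpow_natCast_mul hR.le, mul_comm]
  have hHolder := lintegral_enorm_sq_le_eLpNorm_sq_mul_measure_univ hf hp
  rw [Measure.restrict_apply_univ] at hHolder
  set N := eLpNorm f (ENNReal.ofReal p) (μ.restrict (ball 0 (2 * R) \ ball 0 R))
  calc ENNReal.ofReal ((t - s) ^ (-2 : ℝ)) * ∫⁻ x in ball 0 t \ ball 0 s, ‖f x‖ₑ ^ 2 ∂μ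
      ≤ ENNReal.ofReal ((t - s) ^ (-2 : ℝ)) *
          ∫⁻ x in ball 0 (2 * R) \ ball 0 R, ‖f x‖ₑ ^ 2 ∂μ := by
        gcongr
    _ ≤ ENNReal.ofReal ((t - s) ^ (-2 : ℝ)) *
          (N ^ 2 * (ENNReal.ofReal (μ.real (ball 0 2) ^ (1 - 2 / p)) *
            ENNReal.ofReal (R ^ (Module.finrank ℝ E * (1 - 2 / p))))) := by
        gcongr
        exact hHolder.trans (by gcongr)
    _ = _ := by ring
    _ ≤ shellBound μ m p ε K (μ.real (ball 0 2) ^ (1 - 2 / p)) R s t f := le_add_self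

lemma exists_shell_estimate (F : Type*) [NormedAddCommGroup F] {m p : ℝ} (hm : 2 < m) (hp : 0 < p) :
    ∃ C : ℝ, 0 < C ∧ ∀ ε : ℝ, 0 < ε → ∃ K : ℝ, 0 < K ∧
      ∀ R s t : ℝ, 0 < R → R ≤ s → s < t → t ≤ 2 * R → ∀ f : E → F,
        AEStronglyMeasurable f (μ.restrict (ball 0 (2 * R) \ ball 0 R)) →
        ENNReal.ofReal ((t - s) ^ (-2 : ℝ)) * ∫⁻ x in ball 0 t \ ball 0 s, ‖f x‖ₑ ^ 2 ∂μ ≤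
          shellBound μ m p ε K C R s t f := by
  rcases lt_or_ge p 2 with hp2 | hp2
  · exact ⟨1, one_pos, fun ε hε => ⟨_, by positivity, fun R s t _ hRs hst ht f hf =>
      shell_interpolation_bound 1 hp hp2 hm hε hRs hst ht hf⟩⟩
  · have hV : 0 < μ.real (ball 0 2) :=
      ENNReal.toReal_pos (measure_ball_pos μ 0 two_pos).ne' measure_ball_lt_top.ne
    exact ⟨_, by positivity, fun ε _ => ⟨1, one_pos, fun R s t hR hRs _ ht f hf =>
      shell_holder_bound 1 hp2 hR hRs ht hf⟩⟩

theorem J1_estimate_i_general {F G H : Type*} [NormedAddCommGroup F] [NormedAddCommGroup G]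
    [NormedAddCommGroup H] {m p q r : ℝ} (hm : 2 < m) (hp : 0 < p) (hq : 0 < q) (hr : 0 < r) :
    ∃ C : ℝ, 0 < C ∧ ∀ ε : ℝ, 0 < ε → ∀ δ : ℝ, 0 < δ → ∀ σ : ℝ, 0 < σ →
      ∃ Cε : ℝ, 0 < Cε ∧ ∃ Cδ : ℝ, 0 < Cδ ∧ ∃ Cσ : ℝ, 0 < Cσ ∧
      ∀ R s t : ℝ, 0 < R → R ≤ s → s < t → t ≤ 2 * R →
      ∀ (u : E → F) (v : E → G) (w : E → H),
        AEStronglyMeasurable u (μ.restrict (ball 0 (2 * R) \ ball 0 R)) →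
        AEStronglyMeasurable v (μ.restrict (ball 0 (2 * R) \ ball 0 R)) →
        AEStronglyMeasurable w (μ.restrict (ball 0 (2 * R) \ ball 0 R)) →
        ENNReal.ofReal ((t - s) ^ (-2 : ℝ)) *
          ∫⁻ x in ball 0 t \ ball 0 s, (‖u x‖ₑ ^ 2 + ‖v x‖ₑ ^ 2 + ‖w x‖ₑ ^ 2) ∂μ ≤
        shellBound μ m p ε Cε C R s t u + shellBound μ m q δ Cδ C R s t v +
          shellBound μ m r σ Cσ C R s t w := by
  obtain ⟨Cu, hCu, boundU⟩ := exists_shell_estimate μ F hm hp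
  obtain ⟨Cv, hCv, boundV⟩ := exists_shell_estimate μ G hm hq
  obtain ⟨Cw, hCw, boundW⟩ := exists_shell_estimate μ H hm hr
  refine ⟨Cu + Cv + Cw, by positivity, fun ε hε δ hδ σ hσ => ?_⟩
  obtain ⟨Cε, hCε, boundU⟩ := boundU ε hε
  obtain ⟨Cδ, hCδ, boundV⟩ := boundV δ hδ
  obtain ⟨Cσ, hCσ, boundW⟩ := boundW σ hσ
  refine ⟨Cε, hCε, Cδ, hCδ, Cσ, hCσ, fun R s t hR hRs hst ht u v w hu hv hw => ?_⟩
  have hannulus : μ.restrict (ball 0 t \ ball 0 s) ≤ μ.restrict (ball 0 (2 * R) \ ball 0 R) :=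
    restrict_ball_sdiff_ball_mono μ 0 hRs ht
  rw [lintegral_add_right' _ ((hw.mono_measure hannulus).enorm.pow_const 2),
    lintegral_add_right' _ ((hv.mono_measure hannulus).enorm.pow_const 2), mul_add, mul_add]
  gcongr
  · exact (boundU R s t hR hRs hst ht u hu).trans (shellBound_mono_const (by linarith))
  · exact (boundV R s t hR hRs hst ht v hv).trans (shellBound_mono_const (by linarith))
  · exact (boundW R s t hR hRs hst ht w hw).trans (shellBound_mono_const (by linarith))

end Annulus

lemma shellBound_E3 {F : Type*} [NormedAddCommGroup F] (p ε K C R s t : ℝ) (f : E3 → F) :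
    shellBound volume 6 p ε K C R s t f =
      ENNReal.ofReal ε * LpS f 6 (ball (0 : E3) t \ ball (0 : E3) R) ^ 2 +
        ENNReal.ofReal K * ENNReal.ofReal ((t - s) ^ (-(6 / p - 1))) * LpS f p (Ann R) ^ 2 +
        ENNReal.ofReal C * ENNReal.ofReal ((t - s) ^ (-2 : ℝ)) *
          ENNReal.ofReal (R ^ (3 - 6 / p)) * LpS f p (Ann R) ^ 2 := by
  have hτ_exp : 2 / interpWeight p 6 = 6 / p - 1 := by
    rw [interpWeight, div_div_eq_mul_div]
    ring
  have hR_exp : (Module.finrank ℝ E3 : ℝ) * (1 - 2 / p) = 3 - 6 / p := by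
    rw [finrank_euclideanSpace_fin]
    push_cast
    ring
  rw [shellBound, hτ_exp, hR_exp, LpS, LpS, Ann]

lemma ofReal_norm_sq_add_norm_sq_add_sq {F G : Type*} [NormedAddCommGroup F]
    [NormedAddCommGroup G] (a : F) (b : G) (c : ℝ) :
    ENNReal.ofReal (‖a‖ ^ 2 + ‖b‖ ^ 2 + c ^ 2) = ‖a‖ₑ ^ 2 + ‖b‖ₑ ^ 2 + ‖c‖ₑ ^ 2 := by
  rw [ENNReal.ofReal_add (by positivity) (by positivity),
    ENNReal.ofReal_add (by positivity) (by positivity), ← sq_abs c, ← Real.norm_eq_abs]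
  simp only [ENNReal.ofReal_pow (norm_nonneg _), ofReal_norm]

theorem J1_estimate_i (p q r : ℝ) (hp : 1 ≤ p) (hq : 1 ≤ q) (hr : 1 ≤ r) :
    ∃ C : ℝ, 0 < C ∧ ∀ ε : ℝ, 0 < ε → ∀ δ : ℝ, 0 < δ → ∀ σ : ℝ, 0 < σ →
      ∃ Cε : ℝ, 0 < Cε ∧ ∃ Cδ : ℝ, 0 < Cδ ∧ ∃ Cσ : ℝ, 0 < Cσ ∧
      ∀ R s t : ℝ, 0 < R → 3 * R / 2 ≤ s → s < t → t ≤ 2 * R →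
      ∀ u v : E3 → E3, ∀ θ : E3 → ℝ,
        ContDiff ℝ (⊤ : ℕ∞) u → ContDiff ℝ (⊤ : ℕ∞) v → ContDiff ℝ (⊤ : ℕ∞) θ →
        ENNReal.ofReal ((t - s) ^ (-2 : ℝ)) *
          ∫⁻ x in ball (0 : E3) t \ ball (0 : E3) s,
            ENNReal.ofReal (‖u x‖ ^ 2 + ‖v x‖ ^ 2 + (θ x - thetaBar θ R) ^ 2)
        ≤ ENNReal.ofReal ε * LpS u 6 (ball (0 : E3) t \ ball (0 : E3) R) ^ 2
          + ENNReal.ofReal Cε * ENNReal.ofReal ((t - s) ^ (-(6 / p - 1))) * LpS u p (Ann R) ^ 2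
          + ENNReal.ofReal C * ENNReal.ofReal ((t - s) ^ (-2 : ℝ)) *
              ENNReal.ofReal (R ^ (3 - 6 / p)) * LpS u p (Ann R) ^ 2
          + ENNReal.ofReal δ * LpS v 6 (ball (0 : E3) t \ ball (0 : E3) R) ^ 2
          + ENNReal.ofReal Cδ * ENNReal.ofReal ((t - s) ^ (-(6 / q - 1))) * LpS v q (Ann R) ^ 2
          + ENNReal.ofReal C * ENNReal.ofReal ((t - s) ^ (-2 : ℝ)) *
              ENNReal.ofReal (R ^ (3 - 6 / q)) * LpS v q (Ann R) ^ 2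
          + ENNReal.ofReal σ * LpS (fun x => θ x - thetaBar θ R) 6 (ball (0 : E3) t \ ball (0 : E3) R) ^ 2
          + ENNReal.ofReal Cσ * ENNReal.ofReal ((t - s) ^ (-(6 / r - 1))) *
              LpS (fun x => θ x - thetaBar θ R) r (Ann R) ^ 2
          + ENNReal.ofReal C * ENNReal.ofReal ((t - s) ^ (-2 : ℝ)) *
              ENNReal.ofReal (R ^ (3 - 6 / r)) * LpS (fun x => θ x - thetaBar θ R) r (Ann R) ^ 2 := by
  obtain ⟨C, hC, H⟩ := J1_estimate_i_general (F := E3) (G := E3) (H := ℝ) (volume : Measure E3)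
    (m := 6) (by norm_num) (one_pos.trans_le hp) (one_pos.trans_le hq) (one_pos.trans_le hr)
  refine ⟨C, hC, fun ε hε δ hδ σ hσ => ?_⟩
  obtain ⟨Cε, hCε, Cδ, hCδ, Cσ, hCσ, H⟩ := H ε hε δ hδ σ hσ
  refine ⟨Cε, hCε, Cδ, hCδ, Cσ, hCσ, fun R s t hR hs hst ht u v θ hu hv hθ => ?_⟩
  simpa only [ofReal_norm_sq_add_norm_sq_add_sq, shellBound_E3, ← add_assoc] using
    H R s t hR (by linarith) hst ht u v (fun x => θ x - thetaBar θ R)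
      hu.continuous.aestronglyMeasurable hv.continuous.aestronglyMeasurable
      (hθ.continuous.sub continuous_const).aestronglyMeasurable
end
end

section
/- Let p ∈ (3/2, 3) be a real exponent. For every ε > 0 there exists a constant C_ε > 0 (depending only on ε and p) such that for every R > 0, every s, t with 3R/2 ≤ s < t ≤ 2R, and every smooth vector field u : ℝ³ → ℝ³, the quantity J₂ = (t−s)^{−1} ∫_{B_t∖B_R} |u|³ dx satisfies J₂ ≤ ε ‖u‖²_{L^6(B_t∖B_R)} + C_ε (t−s)^{−(6−p)/(2p−3)} ‖u‖_{L^p(B_{2R}∖B_R)}^{3p/(2p−3)} (the inequality interpreted in the extended nonnegative reals). -/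
/-!
Hölder's inequality makes `r ↦ log ∫ |u|^r` convex, so `∫ |u|³` is at most a product of powers of
`‖u‖_{L^p}` and `‖u‖_{L⁶}`, the latter to the power `6(3-p)/(6-p)`. This power is less than `2`
exactly because `p > 3/2`, which leaves room for Young's inequality to split the product with a
factor `ε` in front of `‖u‖²_{L⁶}`; the conjugate exponent `(6-p)/(2p-3)` then falls on the
remaining factor, including `(t-s)⁻¹`.
-/

open MeasureTheory Metric Filter
open scoped ENNReal NNReal

noncomputable section

theorem mul_le_ofReal_mul_rpow_add_ofReal_mul_rpow {a b ε : ℝ} (hab : a.HolderConjugate b)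
    (hε : 0 < ε) (x y : ℝ≥0∞) :
    x * y ≤ ENNReal.ofReal ε * x ^ a + ENNReal.ofReal (ε ^ (-(b / a))) * y ^ b := by
  -- The weight `δ` is chosen so that Young's inequality for `(δ x) (δ⁻¹ y)` produces `δ ^ a = ε`.
  set δ : ℝ := ε ^ a⁻¹ with hδ
  have δ_pos : 0 < δ := Real.rpow_pos_of_pos hε _
  have δ_rpow : δ ^ a = ε := Real.rpow_inv_rpow hε.le hab.ne_zero
  have inv_δ_rpow : δ⁻¹ ^ b = ε ^ (-(b / a)) := by
    rw [Real.inv_rpow δ_pos.le, ← Real.rpow_neg δ_pos.le, hδ, ← Real.rpow_mul hε.le]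
    ring_nf
  have weights_cancel : ENNReal.ofReal δ * ENNReal.ofReal δ⁻¹ = 1 := by
    rw [← ENNReal.ofReal_mul δ_pos.le, mul_inv_cancel₀ δ_pos.ne', ENNReal.ofReal_one]
  have div_le_self (z : ℝ≥0∞) {c : ℝ} (hc : 1 < c) : z / ENNReal.ofReal c ≤ z :=
    ENNReal.div_le_of_le_mul (le_mul_of_one_le_right' (ENNReal.one_le_ofReal.2 hc.le))
  calc x * y = (ENNReal.ofReal δ * x) * (ENNReal.ofReal δ⁻¹ * y) := by
        rw [mul_mul_mul_comm, weights_cancel, one_mul]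
    _ ≤ (ENNReal.ofReal δ * x) ^ a / ENNReal.ofReal a
          + (ENNReal.ofReal δ⁻¹ * y) ^ b / ENNReal.ofReal b := ENNReal.young_inequality _ _ hab
    _ ≤ (ENNReal.ofReal δ * x) ^ a + (ENNReal.ofReal δ⁻¹ * y) ^ b :=
        add_le_add (div_le_self _ hab.lt) (div_le_self _ hab.symm.lt)
    _ = ENNReal.ofReal ε * x ^ a + ENNReal.ofReal (ε ^ (-(b / a))) * y ^ b := by
        rw [ENNReal.mul_rpow_of_nonneg _ _ hab.nonneg,
          ENNReal.mul_rpow_of_nonneg _ _ hab.symm.nonneg, ENNReal.ofReal_rpow_of_pos δ_pos,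
          ENNReal.ofReal_rpow_of_pos (inv_pos.2 δ_pos), δ_rpow, inv_δ_rpow]

section Interpolation

variable {α : Type*} [MeasurableSpace α] {μ : Measure α} {p r q : ℝ}

theorem lintegral_rpow_le_rpow_mul_rpow {f : α → ℝ≥0∞} (hf : AEMeasurable f μ)
    (hp : 0 ≤ p) (hpr : p ≤ r) (hrq : r ≤ q) (hpq : p < q) :
    ∫⁻ x, f x ^ r ∂μ ≤
      (∫⁻ x, f x ^ p ∂μ) ^ ((q - r) / (q - p)) * (∫⁻ x, f x ^ q ∂μ) ^ ((r - p) / (q - p)) := by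
  have hq : 0 ≤ q := hp.trans hpq.le
  have gap_pos : 0 < q - p := sub_pos.2 hpq
  have weight_p : 0 ≤ (q - r) / (q - p) := div_nonneg (sub_nonneg.2 hrq) gap_pos.le
  have weight_q : 0 ≤ (r - p) / (q - p) := div_nonneg (sub_nonneg.2 hpr) gap_pos.le
  have weights_add : (q - r) / (q - p) + (r - p) / (q - p) = 1 := by field_simp; ring
  have r_eq : r = p * ((q - r) / (q - p)) + q * ((r - p) / (q - p)) := by field_simp; ring
  calc ∫⁻ x, f x ^ r ∂μ
      = ∫⁻ x, (f x ^ p) ^ ((q - r) / (q - p)) * (f x ^ q) ^ ((r - p) / (q - p)) ∂μ := by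
        refine lintegral_congr fun x => ?_
        rw [← ENNReal.rpow_mul, ← ENNReal.rpow_mul, ← ENNReal.rpow_add_of_nonneg _ _
          (mul_nonneg hp weight_p) (mul_nonneg hq weight_q), ← r_eq]
    _ ≤ _ := ENNReal.lintegral_mul_norm_pow_le (hf.pow_const p) (hf.pow_const q)
        weight_p weight_q weights_add

theorem lintegral_enorm_rpow_eq_eLpNorm_rpow {F : Type*} [ENorm F] (f : α → F) (hp : 0 < p) :
    ∫⁻ x, ‖f x‖ₑ ^ p ∂μ = eLpNorm f (ENNReal.ofReal p) μ ^ p := by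
  lift p to ℝ≥0 using hp.le
  rw [ENNReal.ofReal_coe_nnreal, eLpNorm_nnreal_pow_eq_lintegral (NNReal.coe_pos.1 hp).ne']

variable {F : Type*} [TopologicalSpace F] [ContinuousENorm F] {f : α → F}

theorem lintegral_enorm_rpow_le_eLpNorm_rpow_mul_eLpNorm_rpow (hf : AEStronglyMeasurable f μ)
    (hp : 0 < p) (hpr : p ≤ r) (hrq : r ≤ q) (hpq : p < q) :
    ∫⁻ x, ‖f x‖ₑ ^ r ∂μ ≤
      eLpNorm f (ENNReal.ofReal p) μ ^ (p * ((q - r) / (q - p))) *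
        eLpNorm f (ENNReal.ofReal q) μ ^ (q * ((r - p) / (q - p))) := by
  simpa only [lintegral_enorm_rpow_eq_eLpNorm_rpow f hp,
    lintegral_enorm_rpow_eq_eLpNorm_rpow f (hp.trans hpq), ← ENNReal.rpow_mul]
    using lintegral_rpow_le_rpow_mul_rpow hf.enorm hp.le hpr hrq hpq

theorem mul_lintegral_enorm_rpow_le_eLpNorm_rpow_add_eLpNorm_rpow (hf : AEStronglyMeasurable f μ)
    (hp : 0 < p) (hpr : p ≤ r) (hrq : r ≤ q) (hpq : p < q) {a b ε : ℝ}
    (hab : a.HolderConjugate b) (hε : 0 < ε) (c : ℝ≥0∞) :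
    c * ∫⁻ x, ‖f x‖ₑ ^ r ∂μ ≤
      ENNReal.ofReal ε * eLpNorm f (ENNReal.ofReal q) μ ^ (q * ((r - p) / (q - p)) * a) +
        ENNReal.ofReal (ε ^ (-(b / a))) * c ^ b *
          eLpNorm f (ENNReal.ofReal p) μ ^ (p * ((q - r) / (q - p)) * b) := by
  set P : ℝ≥0∞ := eLpNorm f (ENNReal.ofReal p) μ ^ (p * ((q - r) / (q - p))) with hP
  set Q : ℝ≥0∞ := eLpNorm f (ENNReal.ofReal q) μ ^ (q * ((r - p) / (q - p))) with hQ
  calc c * ∫⁻ x, ‖f x‖ₑ ^ r ∂μ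
      ≤ c * (P * Q) := by
        gcongr
        exact lintegral_enorm_rpow_le_eLpNorm_rpow_mul_eLpNorm_rpow hf hp hpr hrq hpq
    _ = Q * (c * P) := by ring
    _ ≤ ENNReal.ofReal ε * Q ^ a + ENNReal.ofReal (ε ^ (-(b / a))) * (c * P) ^ b :=
        mul_le_ofReal_mul_rpow_add_ofReal_mul_rpow hab hε Q (c * P)
    _ = _ := by
        rw [ENNReal.mul_rpow_of_nonneg _ _ hab.symm.nonneg, ← mul_assoc, hP, hQ,
          ← ENNReal.rpow_mul, ← ENNReal.rpow_mul]

end Interpolation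

theorem holderConjugate_six_sub_div {p : ℝ} (hp₁ : 3 / 2 < p) (hp₂ : p < 3) :
    ((6 - p) / (3 * (3 - p))).HolderConjugate ((6 - p) / (2 * p - 3)) := by
  have six_sub_ne : 6 - p ≠ 0 := by linarith
  refine Real.holderConjugate_iff.2 ⟨(one_lt_div (by linarith)).2 (by linarith), ?_⟩
  field_simp
  ring

theorem J2_estimate_iii_general {α F : Type*} [MeasurableSpace α] (μ : Measure α)
    [SeminormedAddCommGroup F] {p : ℝ} (hp₁ : 3 / 2 < p) (hp₂ : p < 3) {ε : ℝ} (hε : 0 < ε) :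
    ∃ Cε : ℝ, 0 < Cε ∧ ∀ τ : ℝ, 0 < τ → ∀ S A : Set α, S ⊆ A →
      ∀ u : α → F, AEStronglyMeasurable u (μ.restrict S) →
        ENNReal.ofReal τ⁻¹ * ∫⁻ x in S, ENNReal.ofReal (‖u x‖ ^ 3) ∂μ
        ≤ ENNReal.ofReal ε * eLpNorm u (ENNReal.ofReal 6) (μ.restrict S) ^ 2
          + ENNReal.ofReal Cε * ENNReal.ofReal (τ ^ (-((6 - p) / (2 * p - 3)))) *
              eLpNorm u (ENNReal.ofReal p) (μ.restrict A) ^ (3 * p / (2 * p - 3)) := by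
  set a : ℝ := (6 - p) / (3 * (3 - p)) with ha
  set b : ℝ := (6 - p) / (2 * p - 3) with hb
  have hab : a.HolderConjugate b := holderConjugate_six_sub_div hp₁ hp₂
  have p_pos : 0 < p := by linarith
  have six_sub_ne : 6 - p ≠ 0 := by linarith
  have three_sub_ne : 3 - p ≠ 0 := by linarith
  have two_mul_sub_pos : 0 < 2 * p - 3 := by linarith
  refine ⟨ε ^ (-(b / a)), Real.rpow_pos_of_pos hε _, fun τ hτ S A hSA u hu => ?_⟩
  have cube_eq (x : α) : ENNReal.ofReal (‖u x‖ ^ 3) = ‖u x‖ₑ ^ (3 : ℝ) := by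
    rw [ENNReal.ofReal_pow (norm_nonneg _), ofReal_norm, ENNReal.rpow_ofNat]
  have τ_rpow : ENNReal.ofReal τ⁻¹ ^ b = ENNReal.ofReal (τ ^ (-b)) := by
    rw [ENNReal.ofReal_rpow_of_pos (inv_pos.2 hτ), Real.inv_rpow hτ.le, Real.rpow_neg hτ.le]
  have exponent_six : 6 * ((3 - p) / (6 - p)) * a = (2 : ℕ) := by
    rw [ha]; push_cast; field_simp; norm_num
  have exponent_p : p * ((6 - 3) / (6 - p)) * b = 3 * p / (2 * p - 3) := by
    rw [hb]; field_simp; norm_num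
  have estimate_on_S := mul_lintegral_enorm_rpow_le_eLpNorm_rpow_add_eLpNorm_rpow hu
    p_pos hp₂.le (show (3 : ℝ) ≤ 6 by norm_num) (by linarith) hab hε (ENNReal.ofReal τ⁻¹)
  rw [exponent_six, exponent_p, τ_rpow, ENNReal.rpow_natCast] at estimate_on_S
  simp only [cube_eq]
  refine estimate_on_S.trans ?_
  gcongr

theorem J2_estimate_iii (p : ℝ) (hp : 3 / 2 < p ∧ p < 3) :
    ∀ ε : ℝ, 0 < ε → ∃ Cε : ℝ, 0 < Cε ∧
      ∀ R s t : ℝ, 0 < R → 3 * R / 2 ≤ s → s < t → t ≤ 2 * R →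
      ∀ u : E3 → E3, ContDiff ℝ (⊤ : ℕ∞) u →
        ENNReal.ofReal ((t - s)⁻¹) *
          ∫⁻ x in ball (0 : E3) t \ ball (0 : E3) R, ENNReal.ofReal (‖u x‖ ^ 3)
        ≤ ENNReal.ofReal ε * LpS u 6 (ball (0 : E3) t \ ball (0 : E3) R) ^ 2
          + ENNReal.ofReal Cε * ENNReal.ofReal ((t - s) ^ (-((6 - p) / (2 * p - 3)))) *
              LpS u p (Ann R) ^ (3 * p / (2 * p - 3)) := by
  intro ε hε
  obtain ⟨Cε, Cε_pos, hCε⟩ := J2_estimate_iii_general (F := E3) (volume : Measure E3) hp.1 hp.2 hε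
  exact ⟨Cε, Cε_pos, fun R s t _ _ hst ht u hu => hCε (t - s) (sub_pos.2 hst) _ _
    (Set.sdiff_subset_sdiff_left (ball_subset_ball ht)) u hu.continuous.aestronglyMeasurable⟩
end
end

section
/- Let p ∈ (3/2, 9/2] and r ∈ [1, 2p') be real exponents, where p' = p/(p−1). For every R > 0, every s, t with 3R/2 ≤ s < t ≤ 2R, every smooth vector field u : ℝ³ → ℝ³ and every smooth function θ : ℝ³ → ℝ, the quantity J₄ = (t−s)^{−1} ∫_{B_t∖B_s} |θ − θ̄_R|² |u| dx satisfies J₄ ≤ (t−s)^{−1} ‖u‖_{L^p(B_t∖B_R)} ‖θ − θ̄_R‖_{L^r(B_t∖B_R)}^{2(3−p')r/((6−r)p')} ‖θ − θ̄_R‖_{L^6(B_t∖B_R)}^{(12p'−6r)/((6−r)p')} (the inequality interpreted in the extended nonnegative reals). -/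
/-!
Write `q = p / (p - 1)` and `f = |θ - θ̄_R|`. Hölder's inequality with the conjugate exponents `q`
and `p` bounds the integral of `f² |u|` by `‖f‖_{2q}² ‖u‖_p`. Since `r ≤ 2q ≤ 6`, the norm
`‖f‖_{2q}` interpolates between `‖f‖_r` and `‖f‖_6`, with the weights that solve
`1 / (2q) = a / r + b / 6` and `a + b = 1`.
-/

open MeasureTheory Metric Filter
open scoped ENNReal NNReal

noncomputable section

section Interpolation

variable {α E F : Type*} {mα : MeasurableSpace α} {μ : Measure α}
  [NormedAddCommGroup E] [NormedAddCommGroup F] {f : α → E} {u : α → F}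

theorem eLpNorm_rpow_norm_mul_rpow_norm_le (hf : AEStronglyMeasurable f μ)
    (hu : AEStronglyMeasurable u μ) {p q r : ℝ≥0∞} [ENNReal.HolderTriple p q r]
    {a b : ℝ} (ha : 0 < a) (hb : 0 < b) :
    eLpNorm (fun x => ‖f x‖ ^ a * ‖u x‖ ^ b) r μ ≤
      eLpNorm f (p * ENNReal.ofReal a) μ ^ a * eLpNorm u (q * ENNReal.ofReal b) μ ^ b := by
  rw [← eLpNorm_norm_rpow f ha, ← eLpNorm_norm_rpow u hb]
  exact eLpNorm_smul_le_mul_eLpNorm (φ := fun x => ‖f x‖ ^ a) (f := fun x => ‖u x‖ ^ b)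
    (hu.norm.aemeasurable.pow_const b).aestronglyMeasurable
    (hf.norm.aemeasurable.pow_const a).aestronglyMeasurable

theorem eLpNorm_le_rpow_eLpNorm_mul_rpow_eLpNorm (hf : AEStronglyMeasurable f μ)
    {p p₀ p₁ : ℝ≥0∞} {a b : ℝ} (ha : 0 ≤ a) (hb : 0 ≤ b) (hab : a + b = 1)
    (hp : p⁻¹ = ENNReal.ofReal a * p₀⁻¹ + ENNReal.ofReal b * p₁⁻¹) :
    eLpNorm f p μ ≤ eLpNorm f p₀ μ ^ a * eLpNorm f p₁ μ ^ b := by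
  rcases ha.eq_or_lt with rfl | ha
  · obtain rfl : b = 1 := by linarith
    obtain rfl : p = p₁ := by simpa using hp
    simp
  rcases hb.eq_or_lt with rfl | hb
  · obtain rfl : a = 1 := by linarith
    obtain rfl : p = p₀ := by simpa using hp
    simp
  have inv_div_ofReal {w : ℝ} (hw : 0 < w) (s : ℝ≥0∞) :
      (s / ENNReal.ofReal w)⁻¹ = ENNReal.ofReal w * s⁻¹ := by
    rw [ENNReal.inv_div (.inl ENNReal.ofReal_ne_top) (.inl (by simpa using hw)),
      div_eq_mul_inv]
  have : ENNReal.HolderTriple (p₀ / ENNReal.ofReal a) (p₁ / ENNReal.ofReal b) p :=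
    ⟨by rw [inv_div_ofReal ha, inv_div_ofReal hb, hp]⟩
  calc eLpNorm f p μ = eLpNorm (fun x => ‖f x‖ ^ a * ‖f x‖ ^ b) p μ := by
        simp only [← Real.rpow_add_of_nonneg (norm_nonneg _) ha.le hb.le, hab, Real.rpow_one,
          eLpNorm_norm]
    _ ≤ eLpNorm f (p₀ / ENNReal.ofReal a * ENNReal.ofReal a) μ ^ a *
        eLpNorm f (p₁ / ENNReal.ofReal b * ENNReal.ofReal b) μ ^ b :=
      eLpNorm_rpow_norm_mul_rpow_norm_le hf hf ha hb
    _ = eLpNorm f p₀ μ ^ a * eLpNorm f p₁ μ ^ b := by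
      rw [ENNReal.div_mul_cancel (by simpa using ha) ENNReal.ofReal_ne_top,
        ENNReal.div_mul_cancel (by simpa using hb) ENNReal.ofReal_ne_top]

theorem lintegral_rpow_norm_mul_norm_le (hf : AEStronglyMeasurable f μ)
    (hu : AEStronglyMeasurable u μ) {p q : ℝ≥0∞} [ENNReal.HolderConjugate q p]
    {a : ℝ} (ha : 0 < a) :
    ∫⁻ x, ENNReal.ofReal (‖f x‖ ^ a * ‖u x‖) ∂μ ≤
      eLpNorm f (q * ENNReal.ofReal a) μ ^ a * eLpNorm u p μ := by
  calc ∫⁻ x, ENNReal.ofReal (‖f x‖ ^ a * ‖u x‖) ∂μ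
      = eLpNorm (fun x => ‖f x‖ ^ a * ‖u x‖ ^ (1 : ℝ)) 1 μ := by
        rw [eLpNorm_one_eq_lintegral_enorm]
        refine lintegral_congr fun x => ?_
        rw [Real.rpow_one, Real.enorm_of_nonneg (by positivity)]
    _ ≤ eLpNorm f (q * ENNReal.ofReal a) μ ^ a * eLpNorm u p μ := by
        simpa using eLpNorm_rpow_norm_mul_rpow_norm_le hf hu (p := q) (q := p) (r := 1) ha one_pos

theorem eLpNorm_ofReal_le_of_le_of_le (hf : AEStronglyMeasurable f μ) {r s k : ℝ} (hr : 0 < r)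
    (hrs : r ≤ s) (hsk : s ≤ k) (hrk : r < k) :
    eLpNorm f (ENNReal.ofReal s) μ ≤
      eLpNorm f (ENNReal.ofReal r) μ ^ ((k - s) * r / ((k - r) * s)) *
        eLpNorm f (ENNReal.ofReal k) μ ^ (k * (s - r) / ((k - r) * s)) := by
  have hs : 0 < s := hr.trans_le hrs
  have hk : 0 < k := hr.trans hrk
  have hkr : 0 < k - r := sub_pos.2 hrk
  have hweight_r : 0 ≤ (k - s) * r / ((k - r) * s) :=
    div_nonneg (mul_nonneg (sub_nonneg.2 hsk) hr.le) (by positivity)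
  have hweight_k : 0 ≤ k * (s - r) / ((k - r) * s) :=
    div_nonneg (mul_nonneg hk.le (sub_nonneg.2 hrs)) (by positivity)
  have hinv : s⁻¹ = (k - s) * r / ((k - r) * s) * r⁻¹ + k * (s - r) / ((k - r) * s) * k⁻¹ := by
    field_simp
    ring
  refine eLpNorm_le_rpow_eLpNorm_mul_rpow_eLpNorm hf hweight_r hweight_k ?_ ?_
  · field_simp
    ring
  · rw [← ENNReal.ofReal_inv_of_pos hs, ← ENNReal.ofReal_inv_of_pos hr,
      ← ENNReal.ofReal_inv_of_pos hk, ← ENNReal.ofReal_mul hweight_r,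
      ← ENNReal.ofReal_mul hweight_k, ← ENNReal.ofReal_add (by positivity) (by positivity), ← hinv]

theorem J4_estimate_ii_general (hf : AEStronglyMeasurable f μ) (hu : AEStronglyMeasurable u μ)
    {p q r k : ℝ} (hpq : p.HolderConjugate q) (hr : 0 < r) (hrq : r ≤ 2 * q) (hqk : 2 * q ≤ k)
    (hrk : r < k) :
    ∫⁻ x, ENNReal.ofReal (‖f x‖ ^ 2 * ‖u x‖) ∂μ ≤
      eLpNorm u (ENNReal.ofReal p) μ *
          eLpNorm f (ENNReal.ofReal r) μ ^ ((k - 2 * q) * r / ((k - r) * q)) *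
        eLpNorm f (ENNReal.ofReal k) μ ^ (k * (2 * q - r) / ((k - r) * q)) := by
  have := hpq.symm.ennrealOfReal
  have double (c : ℝ) : c / ((k - r) * q) = c / ((k - r) * (2 * q)) * 2 := by
    rw [mul_left_comm, div_mul_eq_mul_div, mul_comm c, mul_div_mul_left _ _ two_ne_zero]
  calc ∫⁻ x, ENNReal.ofReal (‖f x‖ ^ 2 * ‖u x‖) ∂μ
      ≤ eLpNorm f (ENNReal.ofReal (2 * q)) μ ^ (2 : ℝ) * eLpNorm u (ENNReal.ofReal p) μ := by
        simpa only [Real.rpow_two, ← ENNReal.ofReal_mul hpq.symm.nonneg, mul_comm q] using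
          lintegral_rpow_norm_mul_norm_le hf hu (p := ENNReal.ofReal p)
            (q := ENNReal.ofReal q) two_pos
    _ ≤ (eLpNorm f (ENNReal.ofReal r) μ ^ ((k - 2 * q) * r / ((k - r) * (2 * q))) *
          eLpNorm f (ENNReal.ofReal k) μ ^ (k * (2 * q - r) / ((k - r) * (2 * q)))) ^ (2 : ℝ) *
        eLpNorm u (ENNReal.ofReal p) μ := by
        gcongr
        exact eLpNorm_ofReal_le_of_le_of_le hf hr hrq hqk hrk
    _ = eLpNorm u (ENNReal.ofReal p) μ *
          eLpNorm f (ENNReal.ofReal r) μ ^ ((k - 2 * q) * r / ((k - r) * q)) *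
        eLpNorm f (ENNReal.ofReal k) μ ^ (k * (2 * q - r) / ((k - r) * q)) := by
        rw [ENNReal.mul_rpow_of_nonneg _ _ zero_le_two, ← ENNReal.rpow_mul, ← ENNReal.rpow_mul,
          ← double, ← double, mul_comm, mul_assoc]

end Interpolation

theorem J4_estimate_ii (p r : ℝ) (hp : 3 / 2 < p ∧ p ≤ 9 / 2)
    (hr : 1 ≤ r ∧ r < 2 * (p / (p - 1))) :
    ∀ R s t : ℝ, 0 < R → 3 * R / 2 ≤ s → s < t → t ≤ 2 * R →
    ∀ u : E3 → E3, ∀ θ : E3 → ℝ, ContDiff ℝ (⊤ : ℕ∞) u → ContDiff ℝ (⊤ : ℕ∞) θ →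
      ENNReal.ofReal ((t - s)⁻¹) *
          ∫⁻ x in ball (0 : E3) t \ ball (0 : E3) s,
            ENNReal.ofReal ((θ x - thetaBar θ R) ^ 2 * ‖u x‖)
      ≤ ENNReal.ofReal ((t - s)⁻¹) * LpS u p (ball (0 : E3) t \ ball (0 : E3) R) *
          LpS (fun x => θ x - thetaBar θ R) r (ball (0 : E3) t \ ball (0 : E3) R) ^ (2 * (3 - (p / (p - 1))) * r / ((6 - r) * (p / (p - 1)))) *
          LpS (fun x => θ x - thetaBar θ R) 6 (ball (0 : E3) t \ ball (0 : E3) R) ^ ((12 * (p / (p - 1)) - 6 * r) / ((6 - r) * (p / (p - 1)))) := by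
  intro R s t hR hs _ _ u θ hu hθ
  have hpq : p.HolderConjugate (p / (p - 1)) := .conjExponent (by linarith)
  have hq : p / (p - 1) ≤ 3 := (div_le_iff₀ hpq.sub_one_pos).2 (by linarith)
  have hsub : ball (0 : E3) t \ ball 0 s ⊆ ball 0 t \ ball 0 R :=
    Set.sdiff_subset_sdiff_right (ball_subset_ball (by linarith [hR]))
  have key := J4_estimate_ii_general (μ := volume.restrict (ball (0 : E3) t \ ball 0 R))
    (f := fun x => θ x - thetaBar θ R) (u := u) (k := 6)
    (hθ.continuous.sub continuous_const).aestronglyMeasurable hu.continuous.aestronglyMeasurable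
    hpq (by linarith) hr.2.le (by linarith) (by linarith)
  have exponent_r : (6 - 2 * (p / (p - 1))) * r = 2 * (3 - p / (p - 1)) * r := by ring
  have exponent_six : 6 * (2 * (p / (p - 1)) - r) = 12 * (p / (p - 1)) - 6 * r := by ring
  simp only [Real.norm_eq_abs, sq_abs, exponent_r, exponent_six] at key
  simpa only [LpS, mul_assoc] using
    mul_le_mul_right ((lintegral_mono_set hsub).trans key) (ENNReal.ofReal (t - s)⁻¹)
end
end

section
/- Let q ∈ [1, 2) and r ∈ [1, 2) be real exponents. For all δ, σ > 0 there exists a constant C_{δ,σ} > 0 (depending only on δ, σ, q, r) such that for every R > 0, every s, t with 3R/2 ≤ s < t ≤ 2R, every smooth vector field v : ℝ³ → ℝ³ and every smooth function θ : ℝ³ → ℝ, the quantity J₅ = (t−s)^{−1} ∫_{B_t∖B_s} |v| |θ − θ̄_R| dx satisfies J₅ ≤ δ ‖v‖²_{L^6(B_t∖B_R)} + σ ‖θ − θ̄_R‖²_{L^6(B_t∖B_R)} + C_{δ,σ} (t−s)^{−(6−q)(6−r)/(q(6−r)+r(6−q))} ‖v‖_{L^q(B_{2R}∖B_R)}^{2q(6−r)/(q(6−r)+r(6−q))}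 ‖θ − θ̄_R‖_{L^r(B_{2R}∖B_R)}^{2r(6−q)/(q(6−r)+r(6−q))} (the inequality interpreted in the extended nonnegative reals). -/
/-!
Write `α = 2q/(6-q)` and `β = 2r/(6-r)`, so that `1/2 = α/q + (1-α)/6 = β/r + (1-β)/6`. The
Cauchy–Schwarz inequality and the interpolation of `L^2` between `L^q` (resp. `L^r`) and `L^6` give
`∫ |v||w| ≤ ‖v‖_q^α ‖v‖_6^(1-α) ‖w‖_r^β ‖w‖_6^(1-β)`. Young's inequality with weights `(1-α)/2`,
`(1-β)/2`, `(α+β)/2` splits this product, divided by `t - s`, into the two `L^6` terms and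
`(t-s)^(-2/(α+β)) ‖v‖_q^(2α/(α+β)) ‖w‖_r^(2β/(α+β))`.
-/

open MeasureTheory Metric Filter
open scoped ENNReal NNReal

noncomputable section

section Interpolation

variable {X E F : Type*} [MeasurableSpace X] {μ : Measure X}
  [TopologicalSpace E] [ContinuousENorm E] [TopologicalSpace F] [ContinuousENorm F]
  {f : X → E} {g : X → F}

theorem eLpNorm_ofReal_eq_lintegral_rpow_enorm {ε : Type*} [ENorm ε] {f : X → ε} {p : ℝ}
    (hp : 0 < p) :
    eLpNorm f (ENNReal.ofReal p) μ = (∫⁻ x, ‖f x‖ₑ ^ p ∂μ) ^ (1 / p) := by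
  rw [eLpNorm_eq_lintegral_rpow_enorm_toReal (ENNReal.ofReal_pos.2 hp).ne' ENNReal.ofReal_ne_top,
    ENNReal.toReal_ofReal hp.le]

theorem lintegral_enorm_mul_enorm_le_eLpNorm_mul_eLpNorm {p q : ℝ} (hpq : p.HolderConjugate q)
    (hf : AEStronglyMeasurable f μ) (hg : AEStronglyMeasurable g μ) :
    ∫⁻ x, ‖f x‖ₑ * ‖g x‖ₑ ∂μ ≤
      eLpNorm f (ENNReal.ofReal p) μ * eLpNorm g (ENNReal.ofReal q) μ := by
  rw [eLpNorm_ofReal_eq_lintegral_rpow_enorm hpq.pos,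
    eLpNorm_ofReal_eq_lintegral_rpow_enorm hpq.symm.pos]
  exact ENNReal.lintegral_mul_le_Lp_mul_Lq μ hpq hf.enorm hg.enorm

theorem eLpNorm_le_eLpNorm_rpow_mul_eLpNorm_rpow_s15 {p q m α : ℝ} (hp : 0 < p) (hq : 0 < q)
    (hm : 0 < m) (hα₀ : 0 ≤ α) (hα₁ : α ≤ 1) (h : 1 / p = α / q + (1 - α) / m)
    (hf : AEStronglyMeasurable f μ) :
    eLpNorm f (ENNReal.ofReal p) μ ≤
      eLpNorm f (ENNReal.ofReal q) μ ^ α * eLpNorm f (ENNReal.ofReal m) μ ^ (1 - α) := by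
  have : 0 ≤ 1 - α := sub_nonneg.2 hα₁
  have hweights : α * p / q + (1 - α) * p / m = 1 := by
    rw [mul_div_right_comm, mul_div_right_comm, ← add_mul, ← h, one_div_mul_cancel hp.ne']
  have hpoint (y : ℝ≥0∞) :
      y ^ p = (y ^ q) ^ (α * p / q) * (y ^ m) ^ ((1 - α) * p / m) := by
    rw [← ENNReal.rpow_mul, ← ENNReal.rpow_mul, mul_div_cancel₀ _ hq.ne',
      mul_div_cancel₀ _ hm.ne', ← ENNReal.rpow_add_of_nonneg _ _ (by positivity) (by positivity),
      ← add_mul, add_sub_cancel, one_mul]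
  simp only [eLpNorm_ofReal_eq_lintegral_rpow_enorm, hp, hq, hm]
  calc (∫⁻ x, ‖f x‖ₑ ^ p ∂μ) ^ (1 / p)
      = (∫⁻ x, (‖f x‖ₑ ^ q) ^ (α * p / q) * (‖f x‖ₑ ^ m) ^ ((1 - α) * p / m) ∂μ) ^ (1 / p) := by
        simp only [← hpoint]
    _ ≤ ((∫⁻ x, ‖f x‖ₑ ^ q ∂μ) ^ (α * p / q) *
          (∫⁻ x, ‖f x‖ₑ ^ m ∂μ) ^ ((1 - α) * p / m)) ^ (1 / p) := by
        gcongr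
        exact ENNReal.lintegral_mul_norm_pow_le (hf.enorm.pow_const q) (hf.enorm.pow_const m)
          (by positivity) (by positivity) hweights
    _ = ((∫⁻ x, ‖f x‖ₑ ^ q ∂μ) ^ (1 / q)) ^ α *
          ((∫⁻ x, ‖f x‖ₑ ^ m ∂μ) ^ (1 / m)) ^ (1 - α) := by
        rw [ENNReal.mul_rpow_of_nonneg _ _ (by positivity)]
        simp only [← ENNReal.rpow_mul]
        congr 2 <;> field_simp

theorem eLpNorm_two_le_eLpNorm_rpow_mul_eLpNorm_six_rpow {q : ℝ} (hq₀ : 0 < q) (hq₂ : q ≤ 2)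
    (hf : AEStronglyMeasurable f μ) :
    eLpNorm f 2 μ ≤ eLpNorm f (ENNReal.ofReal q) μ ^ (2 * q / (6 - q)) *
      eLpNorm f 6 μ ^ (1 - 2 * q / (6 - q)) := by
  have h6q : 0 < 6 - q := by linarith
  simpa only [ENNReal.ofReal_ofNat] using
    eLpNorm_le_eLpNorm_rpow_mul_eLpNorm_rpow_s15 two_pos hq₀ (by norm_num : (0 : ℝ) < 6)
      (by positivity) (by rw [div_le_one h6q]; linarith) (by field_simp; ring) hf

theorem lintegral_enorm_mul_enorm_le_eLpNorm_rpow_mul_eLpNorm_six_rpow {q r : ℝ}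
    (hq₀ : 0 < q) (hq₂ : q ≤ 2) (hr₀ : 0 < r) (hr₂ : r ≤ 2)
    (hf : AEStronglyMeasurable f μ) (hg : AEStronglyMeasurable g μ) :
    ∫⁻ x, ‖f x‖ₑ * ‖g x‖ₑ ∂μ ≤
      (eLpNorm f (ENNReal.ofReal q) μ ^ (2 * q / (6 - q)) *
        eLpNorm f 6 μ ^ (1 - 2 * q / (6 - q))) *
      (eLpNorm g (ENNReal.ofReal r) μ ^ (2 * r / (6 - r)) *
        eLpNorm g 6 μ ^ (1 - 2 * r / (6 - r))) :=
  calc ∫⁻ x, ‖f x‖ₑ * ‖g x‖ₑ ∂μ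
      ≤ eLpNorm f 2 μ * eLpNorm g 2 μ := by
        simpa only [ENNReal.ofReal_ofNat] using
          lintegral_enorm_mul_enorm_le_eLpNorm_mul_eLpNorm Real.HolderConjugate.two_two hf hg
    _ ≤ _ := mul_le_mul' (eLpNorm_two_le_eLpNorm_rpow_mul_eLpNorm_six_rpow hq₀ hq₂ hf)
        (eLpNorm_two_le_eLpNorm_rpow_mul_eLpNorm_six_rpow hr₀ hr₂ hg)

end Interpolation

theorem rpow_mul_rpow_mul_rpow_le_add (x y z : ℝ≥0∞) {a b c : ℝ} (ha : 0 ≤ a)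
    (hb : 0 ≤ b) (hc : 0 ≤ c) (habc : a + b + c = 1) : x ^ a * y ^ b * z ^ c ≤ x + y + z := by
  have hx : x ≤ x + y + z := by rw [add_assoc]; exact le_self_add
  have hy : y ≤ x + y + z := by rw [add_right_comm]; exact le_add_self
  have hz : z ≤ x + y + z := le_add_self
  calc x ^ a * y ^ b * z ^ c
      ≤ (x + y + z) ^ a * (x + y + z) ^ b * (x + y + z) ^ c := by gcongr
    _ = x + y + z := by
      rw [← ENNReal.rpow_add_of_nonneg _ _ ha hb,
        ← ENNReal.rpow_add_of_nonneg _ _ (add_nonneg ha hb) hc, habc, ENNReal.rpow_one]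

theorem rpow_mul_rpow_mul_le_weighted_add {δ σ : ℝ} (hδ : 0 < δ) (hσ : 0 < σ) {a b c : ℝ}
    (ha : 0 ≤ a) (hb : 0 ≤ b) (hc : 0 < c) (habc : a + b + c = 1) (x y z : ℝ≥0∞) :
    x ^ a * y ^ b * z ≤ ENNReal.ofReal δ * x + ENNReal.ofReal σ * y +
      ENNReal.ofReal (δ ^ (-(a / c)) * σ ^ (-(b / c))) * z ^ (1 / c) := by
  have hcancel {u : ℝ} (hu : 0 < u) (e : ℝ) : u ^ e * (u ^ (-(e / c))) ^ c = 1 := by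
    rw [← Real.rpow_mul hu.le, neg_mul, div_mul_cancel₀ _ hc.ne', ← Real.rpow_add hu,
      add_neg_cancel, Real.rpow_zero]
  have hconst : ENNReal.ofReal (δ ^ a) * ENNReal.ofReal (σ ^ b) *
      ENNReal.ofReal (δ ^ (-(a / c)) * σ ^ (-(b / c))) ^ c = 1 := by
    rw [ENNReal.ofReal_rpow_of_pos (by positivity), Real.mul_rpow (by positivity) (by positivity),
      ← ENNReal.ofReal_mul (by positivity), ← ENNReal.ofReal_mul (by positivity),
      mul_mul_mul_comm, hcancel hδ, hcancel hσ, one_mul, ENNReal.ofReal_one]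
  calc x ^ a * y ^ b * z
      = (ENNReal.ofReal (δ ^ a) * ENNReal.ofReal (σ ^ b) *
          ENNReal.ofReal (δ ^ (-(a / c)) * σ ^ (-(b / c))) ^ c) * (x ^ a * y ^ b * z) := by
        rw [hconst, one_mul]
    _ = (ENNReal.ofReal δ * x) ^ a * (ENNReal.ofReal σ * y) ^ b *
          (ENNReal.ofReal (δ ^ (-(a / c)) * σ ^ (-(b / c))) * z ^ (1 / c)) ^ c := by
        rw [ENNReal.mul_rpow_of_nonneg _ _ ha, ENNReal.mul_rpow_of_nonneg _ _ hb,
          ENNReal.mul_rpow_of_nonneg _ _ hc.le, ENNReal.ofReal_rpow_of_pos hδ,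
          ENNReal.ofReal_rpow_of_pos hσ, ← ENNReal.rpow_mul, one_div_mul_cancel hc.ne',
          ENNReal.rpow_one]
        ring
    _ ≤ _ := rpow_mul_rpow_mul_rpow_le_add _ _ _ ha hb hc.le habc

theorem exists_mul_interpolation_le_weighted_add_sq {α β δ σ : ℝ} (hα₀ : 0 < α) (hα₁ : α ≤ 1)
    (hβ₀ : 0 < β) (hβ₁ : β ≤ 1) (hδ : 0 < δ) (hσ : 0 < σ) :
    ∃ C : ℝ, 0 < C ∧ ∀ τ : ℝ, 0 < τ → ∀ a₀ a₁ b₀ b₁ : ℝ≥0∞,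
      ENNReal.ofReal τ⁻¹ * ((a₀ ^ α * a₁ ^ (1 - α)) * (b₀ ^ β * b₁ ^ (1 - β))) ≤
        ENNReal.ofReal δ * a₁ ^ 2 + ENNReal.ofReal σ * b₁ ^ 2 +
          ENNReal.ofReal C * ENNReal.ofReal (τ ^ (-(2 / (α + β)))) *
            a₀ ^ (2 * α / (α + β)) * b₀ ^ (2 * β / (α + β)) := by
  have hc : 0 < (α + β) / 2 := by positivity
  refine ⟨δ ^ (-((1 - α) / 2 / ((α + β) / 2))) * σ ^ (-((1 - β) / 2 / ((α + β) / 2))),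
    by positivity, fun τ hτ a₀ a₁ b₀ b₁ => ?_⟩
  have hsq (y : ℝ≥0∞) (e : ℝ) : (y ^ 2) ^ (e / 2) = y ^ e := by
    rw [← ENNReal.rpow_natCast_mul, Nat.cast_ofNat, mul_div_cancel₀ _ two_ne_zero]
  have hτ_pow : ENNReal.ofReal τ⁻¹ ^ (2 / (α + β)) = ENNReal.ofReal (τ ^ (-(2 / (α + β)))) := by
    rw [ENNReal.ofReal_rpow_of_pos (inv_pos.2 hτ), Real.inv_rpow hτ.le, Real.rpow_neg hτ.le]
  calc ENNReal.ofReal τ⁻¹ * ((a₀ ^ α * a₁ ^ (1 - α)) * (b₀ ^ β * b₁ ^ (1 - β)))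
      = (a₁ ^ 2) ^ ((1 - α) / 2) * (b₁ ^ 2) ^ ((1 - β) / 2) *
          (ENNReal.ofReal τ⁻¹ * a₀ ^ α * b₀ ^ β) := by
        rw [hsq, hsq]
        ring
    _ ≤ _ := rpow_mul_rpow_mul_le_weighted_add hδ hσ (by linarith) (by linarith) hc
        (by ring) _ _ _
    _ = _ := by
        rw [one_div_div, ENNReal.mul_rpow_of_nonneg _ _ (by positivity),
          ENNReal.mul_rpow_of_nonneg _ _ (by positivity), hτ_pow, ← ENNReal.rpow_mul,
          ← ENNReal.rpow_mul, mul_div_left_comm, mul_div_left_comm β]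
        ring_nf

universe u v w

theorem J5_estimate_i_general {q r δ σ : ℝ} (hq₀ : 0 < q) (hq₂ : q ≤ 2) (hr₀ : 0 < r) (hr₂ : r ≤ 2)
    (hδ : 0 < δ) (hσ : 0 < σ) :
    ∃ C : ℝ, 0 < C ∧ ∀ {X : Type u} [MeasurableSpace X] {μ : Measure X}
      {E : Type v} [TopologicalSpace E] [ContinuousENorm E]
      {F : Type w} [TopologicalSpace F] [ContinuousENorm F] {f : X → E} {g : X → F} {S A B : Set X}
      {τ : ℝ}, 0 < τ → S ⊆ A → S ⊆ B →
      AEStronglyMeasurable f (μ.restrict S) → AEStronglyMeasurable g (μ.restrict S) →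
        ENNReal.ofReal τ⁻¹ * ∫⁻ x in S, ‖f x‖ₑ * ‖g x‖ₑ ∂μ
        ≤ ENNReal.ofReal δ * eLpNorm f 6 (μ.restrict A) ^ 2
          + ENNReal.ofReal σ * eLpNorm g 6 (μ.restrict A) ^ 2
          + ENNReal.ofReal C *
              ENNReal.ofReal (τ ^ (-((6 - q) * (6 - r) / (q * (6 - r) + r * (6 - q))))) *
              eLpNorm f (ENNReal.ofReal q) (μ.restrict B) ^
                (2 * q * (6 - r) / (q * (6 - r) + r * (6 - q))) *
              eLpNorm g (ENNReal.ofReal r) (μ.restrict B) ^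
                (2 * r * (6 - q) / (q * (6 - r) + r * (6 - q))) := by
  have h6q : 0 < 6 - q := by linarith
  have h6r : 0 < 6 - r := by linarith
  have hα₁ : 2 * q / (6 - q) ≤ 1 := by rw [div_le_one h6q]; linarith
  have hβ₁ : 2 * r / (6 - r) ≤ 1 := by rw [div_le_one h6r]; linarith
  have hsum : 2 * q / (6 - q) + 2 * r / (6 - r) =
      2 * (q * (6 - r) + r * (6 - q)) / ((6 - q) * (6 - r)) := by
    field_simp
  have hτ_exp : 2 / (2 * q / (6 - q) + 2 * r / (6 - r)) =
      (6 - q) * (6 - r) / (q * (6 - r) + r * (6 - q)) := by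
    rw [hsum]; field_simp
  have hf_exp : 2 * (2 * q / (6 - q)) / (2 * q / (6 - q) + 2 * r / (6 - r)) =
      2 * q * (6 - r) / (q * (6 - r) + r * (6 - q)) := by
    rw [hsum]; field_simp
  have hg_exp : 2 * (2 * r / (6 - r)) / (2 * q / (6 - q) + 2 * r / (6 - r)) =
      2 * r * (6 - q) / (q * (6 - r) + r * (6 - q)) := by
    rw [hsum]; field_simp
  obtain ⟨C, hC, hyoung⟩ := exists_mul_interpolation_le_weighted_add_sq
    (div_pos (by positivity) h6q) hα₁ (div_pos (by positivity) h6r) hβ₁ hδ hσ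
  rw [hτ_exp, hf_exp, hg_exp] at hyoung
  refine ⟨C, hC, fun {X} _ {μ E} _ _ {F} _ _ {f g S A B τ} hτ hSA hSB hf hg => ?_⟩
  have hA : μ.restrict S ≤ μ.restrict A := Measure.restrict_mono hSA le_rfl
  have hB : μ.restrict S ≤ μ.restrict B := Measure.restrict_mono hSB le_rfl
  refine le_trans ?_ (hyoung τ hτ _ _ _ _)
  gcongr ENNReal.ofReal τ⁻¹ * ?_
  refine (lintegral_enorm_mul_enorm_le_eLpNorm_rpow_mul_eLpNorm_six_rpow
    hq₀ hq₂ hr₀ hr₂ hf hg).trans ?_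
  have := sub_nonneg.2 hα₁
  have := sub_nonneg.2 hβ₁
  gcongr

theorem J5_estimate_i (q r : ℝ) (hq : 1 ≤ q ∧ q < 2) (hr : 1 ≤ r ∧ r < 2) :
    ∀ δ : ℝ, 0 < δ → ∀ σ : ℝ, 0 < σ → ∃ Cδσ : ℝ, 0 < Cδσ ∧
      ∀ R s t : ℝ, 0 < R → 3 * R / 2 ≤ s → s < t → t ≤ 2 * R →
      ∀ v : E3 → E3, ∀ θ : E3 → ℝ, ContDiff ℝ (⊤ : ℕ∞) v → ContDiff ℝ (⊤ : ℕ∞) θ →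
        ENNReal.ofReal ((t - s)⁻¹) *
          ∫⁻ x in ball (0 : E3) t \ ball (0 : E3) s,
            ENNReal.ofReal (‖v x‖ * |θ x - thetaBar θ R|)
        ≤ ENNReal.ofReal δ * LpS v 6 (ball (0 : E3) t \ ball (0 : E3) R) ^ 2
          + ENNReal.ofReal σ * LpS (fun x => θ x - thetaBar θ R) 6 (ball (0 : E3) t \ ball (0 : E3) R) ^ 2
          + ENNReal.ofReal Cδσ *
              ENNReal.ofReal ((t - s) ^ (-((6 - q) * (6 - r) / (q * (6 - r) + r * (6 - q))))) *
              LpS v q (Ann R) ^ (2 * q * (6 - r) / (q * (6 - r) + r * (6 - q))) *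
              LpS (fun x => θ x - thetaBar θ R) r (Ann R) ^ (2 * r * (6 - q) / (q * (6 - r) + r * (6 - q))) := by
  intro δ hδ σ hσ
  obtain ⟨C, hC, hbound⟩ := J5_estimate_i_general (by linarith) hq.2.le (by linarith) hr.2.le hδ hσ
  refine ⟨C, hC, fun R s t _ hs hst ht v θ hv hθ => ?_⟩
  have hRs : ball (0 : E3) R ⊆ ball 0 s := ball_subset_ball (by linarith)
  simpa only [LpS, ENNReal.ofReal_mul (norm_nonneg _), ofReal_norm, ← Real.norm_eq_abs,
    ENNReal.ofReal_ofNat] using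
    hbound (g := fun x => θ x - thetaBar θ R) (B := Ann R) (sub_pos.2 hst)
      (Set.sdiff_subset_sdiff_right hRs) (Set.sdiff_subset_sdiff (ball_subset_ball ht) hRs)
      hv.continuous.aestronglyMeasurable
      (hθ.continuous.sub continuous_const).aestronglyMeasurable
end
end
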